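/- (Variational principle for t-entropy) For every α-invariant measure μ ∈ M_α(X, m), the t-entropy satisfies τ(μ) = inf over φ ∈ L^∞(X, m) of ( λ(φ) − μ[φ] ). -/

import Mathlib

open MeasureTheory Filter
open scoped ENNReal NNReal

noncomputable section

/-- The Birkhoff sum `S_n φ (x) = φ(x) + φ(α x) + ⋯ + φ(α^{n-1} x)`. -/
def birkhoff {X : Type*} (α : X → X) (φ : X → ℝ) (n : ℕ) (x : X) : ℝ :=
  ∑ i ∈ Finset.range n, φ (α^[i] x)

/-- Boundedness of the shift operator `A f = f ∘ α` on `L¹(X, m)`: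
there is `C > 0` with `m (α⁻¹ G) ≤ C · m G` for all measurable `G`. -/
def ShiftBounded {X : Type*} [MeasurableSpace X] (m : Measure X) (α : X → X) : Prop :=
  ∃ C : ℝ≥0, 0 < C ∧ ∀ G : Set X, MeasurableSet G → m (α ⁻¹' G) ≤ (C : ℝ≥0∞) * m G

/-- The operator norm `‖(e^ψ A^s)^k‖` of the `k`-th power of the weighted shift operator
`e^ψ A^s` (with base shift `α^[s]`) acting on `L¹(X, m)`, computed as the supremum of
`‖(e^ψ A^s)^k f‖₁` over `f` with `‖f‖₁ = 1`. -/
def weightedOpNorm {X : Type*} [MeasurableSpace X] (m : Measure X) (α : X → X) (s : ℕ)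
    (ψ : X → ℝ) (k : ℕ) : ℝ :=
  sSup {r : ℝ | ∃ f : X → ℝ, Integrable f m ∧ (∫ x, |f x| ∂m) = 1 ∧
    r = ∫ x, Real.exp (∑ j ∈ Finset.range k, ψ (α^[s * j] x)) * |f (α^[s * k] x)| ∂m}

/-- `λ(ψ, A^s)`: the logarithm of the spectral radius of `e^ψ A^s` on `L¹(X, m)`. -/
def spectralPotentialBase {X : Type*} [MeasurableSpace X] (m : Measure X) (α : X → X)
    (s : ℕ) (ψ : X → ℝ) : ℝ :=
  limUnder atTop fun k : ℕ => Real.log (weightedOpNorm m α s ψ k) / (k : ℝ)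

/-- The spectral potential `λ(φ) = lim (1/n) ln ‖A_φⁿ‖`. -/
def spectralPotential {X : Type*} [MeasurableSpace X] (m : Measure X) (α : X → X)
    (φ : X → ℝ) : ℝ :=
  spectralPotentialBase m α 1 φ

/-- A functional on `L^∞(X, m)` is positive if it is nonnegative on nonnegative functions. -/
def IsPositiveFunctional {X : Type*} [MeasurableSpace X] (m : Measure X)
    (μ : Lp ℝ ⊤ m → ℝ) : Prop :=
  ∀ φ : Lp ℝ ⊤ m, (0 : X → ℝ) ≤ᵐ[m] ⇑φ → 0 ≤ μ φ

/-- A functional on `L^∞(X, m)` is normalized if its value on the unit function is `1`. -/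
def IsNormalizedFunctional {X : Type*} [MeasurableSpace X] (m : Measure X)
    (μ : Lp ℝ ⊤ m → ℝ) : Prop :=
  ∀ φ : Lp ℝ ⊤ m, ⇑φ =ᵐ[m] (fun _ => (1 : ℝ)) → μ φ = 1

/-- A functional `μ` on `L^∞(X, m)` is `α`-invariant if `μ[f ∘ α] = μ[f]`. -/
def IsInvariantFunctional {X : Type*} [MeasurableSpace X] (m : Measure X) (α : X → X)
    (μ : Lp ℝ ⊤ m → ℝ) : Prop :=
  ∀ φ ψ : Lp ℝ ⊤ m, ⇑ψ =ᵐ[m] (fun x => φ (α x)) → μ ψ = μ φ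

/-- `μ ∈ M_α(X, m)`: positive, normalized and `α`-invariant. -/
def MemMalpha {X : Type*} [MeasurableSpace X] (m : Measure X) (α : X → X)
    (μ : Lp ℝ ⊤ m → ℝ) : Prop :=
  IsPositiveFunctional m μ ∧ IsNormalizedFunctional m μ ∧ IsInvariantFunctional m α μ

/-- A measurable partition of unity on `X` made of nonnegative elements of `L^∞(X, m)`
summing to `1`. -/
structure PartUnity {X : Type*} [MeasurableSpace X] (m : Measure X) where
  k : ℕ
  g : Fin k → Lp ℝ ⊤ m
  nonneg : ∀ i, (0 : X → ℝ) ≤ᵐ[m] ⇑(g i)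
  sum_one : ∀ᵐ x ∂m, (∑ i, (g i : Lp ℝ ⊤ m) x) = 1

/-- The summand `a · ln (r / a)` with the conventions: it is `0` if `a = 0`, and `-∞` if
`a ≠ 0` and `r = 0`. -/
def entTerm (a r : ℝ) : EReal :=
  if a = 0 then 0 else if r = 0 then ⊥ else ((a * Real.log (r / a) : ℝ) : EReal)

/-- `τₙ(μ, D)`. -/
def tauN {X : Type*} [MeasurableSpace X] (m : Measure X) (α : X → X)
    (μ : Lp ℝ ⊤ m → ℝ) (n : ℕ) (D : PartUnity m) : EReal :=
  sSup {r : EReal | ∃ f : X → ℝ, Integrable f m ∧ (∫ x, |f x| ∂m) = 1 ∧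
    r = ∑ i, entTerm (μ (D.g i)) (∫ x, (D.g i : Lp ℝ ⊤ m) x * |f (α^[n] x)| ∂m)}

/-- The t-entropy `τ(μ) = inf_{n, D} τₙ(μ, D) / n`. -/
def tEntropy {X : Type*} [MeasurableSpace X] (m : Measure X) (α : X → X)
    (μ : Lp ℝ ⊤ m → ℝ) : EReal :=
  ⨅ (n : ℕ) (_ : 0 < n) (D : PartUnity m), (((n : ℝ)⁻¹ : ℝ) : EReal) * tauN m α μ n D

/-- The t-entropy extended by `τ(μ) = -∞` outside `M_α(X, m)`. -/
def tEntropyExt {X : Type*} [MeasurableSpace X] (m : Measure X) (α : X → X)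
    (μ : Lp ℝ ⊤ m → ℝ) : EReal :=
  @ite _ (MemMalpha m α μ) (Classical.dec _) (tEntropy m α μ) ⊥


lemma aux_entTerm_le (p r v c : ℝ) (hp : 0 ≤ p) (hr : 0 ≤ r) (hc : 0 < c) :
    entTerm p r ≤ ((Real.exp v * r / c - p - p * v + p * Real.log c : ℝ) : EReal) := by
  unfold entTerm
  split_ifs with h1 h2
  · subst h1
    simp only [zero_mul, sub_zero, add_zero]
    exact_mod_cast (by positivity : (0:ℝ) ≤ Real.exp v * r / c)
  · exact bot_le
  · have hp' : 0 < p := lt_of_le_of_ne hp (Ne.symm h1)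
    have hr' : 0 < r := lt_of_le_of_ne hr (Ne.symm h2)
    rw [EReal.coe_le_coe_iff]
    have h := Real.log_le_sub_one_of_pos (x := Real.exp v * r / (p * c)) (by positivity)
    rw [Real.log_div (by positivity) (by positivity), Real.log_mul (by positivity) (by positivity),
      Real.log_mul (by positivity) (by positivity), Real.log_exp] at h
    rw [Real.log_div (by positivity) (by positivity)]
    have h3 := mul_le_mul_of_nonneg_left h hp
    have h4 : p * (Real.exp v * r / (p * c) - 1) = Real.exp v * r / c - p := by
      field_simp
    rw [h4] at h3
    nlinarith

lemma aux_coe_sum {ι : Type*} (s : Finset ι) (f : ι → ℝ) :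
    ((∑ i ∈ s, f i : ℝ) : EReal) = ∑ i ∈ s, (f i : EReal) := by
  classical
  induction s using Finset.induction_on with
  | empty => simp
  | insert a s ha ih => rw [Finset.sum_insert ha, Finset.sum_insert ha, EReal.coe_add, ih]

lemma aux_jensen {ι : Type*} [Fintype ι] (p r v : ι → ℝ) (c : ℝ) (hp : ∀ i, 0 ≤ p i)
    (hr : ∀ i, 0 ≤ r i) (hc : 0 < c) (hs : ∑ i, p i = 1) (hle : ∑ i, Real.exp (v i) * r i ≤ c) :
    ∑ i, entTerm (p i) (r i) ≤ ((Real.log c - ∑ i, p i * v i : ℝ) : EReal) := by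
  calc _ ≤ ∑ i, ((Real.exp (v i) * r i / c - p i - p i * v i + p i * Real.log c : ℝ) : EReal) :=
        Finset.sum_le_sum fun i _ => aux_entTerm_le _ _ _ _ (hp i) (hr i) hc
    _ = _ := (aux_coe_sum _ _).symm
    _ ≤ _ := by
      rw [EReal.coe_le_coe_iff]
      rw [Finset.sum_add_distrib, Finset.sum_sub_distrib, Finset.sum_sub_distrib,
        ← Finset.sum_mul, ← Finset.sum_div, hs]
      have := (div_le_one hc).2 hle
      linarith

lemma aux_log_lower (y : ℝ) (hy : -(1/2) ≤ y) : y - 2 * y ^ 2 ≤ Real.log (1 + y) := by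
  have h1 : 0 < 1 + y := by linarith
  have h := Real.one_sub_inv_le_log_of_pos h1
  refine le_trans ?_ h
  have : 1 - (1 + y)⁻¹ - (y - 2 * y ^ 2) = y ^ 2 * (1 + 2 * y) / (1 + y) := by
    field_simp; ring
  have h2 : 0 ≤ y ^ 2 * (1 + 2 * y) / (1 + y) := by
    apply div_nonneg (mul_nonneg (sq_nonneg _) (by linarith)) h1.le
  linarith

lemma aux_minimax {ι : Type*} [Fintype ι] (R : Set (ι → ℝ)) (hconv : Convex ℝ R)
    (hne : R.Nonempty) (M : ℝ) (hR0 : ∀ r ∈ R, ∀ i, 0 ≤ r i) (hRM : ∀ r ∈ R, ∀ i, r i ≤ M)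
    (p : ι → ℝ) (hp : ∀ i, 0 ≤ p i) (hs : ∑ i, p i = 1) (c : ℝ)
    (hc : ∀ r ∈ R, ∑ i, entTerm (p i) (r i) ≤ (c : EReal)) (ε : ℝ) (hε : 0 < ε) :
    ∃ (t : ι → ℝ) (q : ℝ), 0 < q ∧ (∀ r ∈ R, ∑ i, Real.exp (t i) * r i ≤ q) ∧
      Real.log q - ∑ i, p i * t i ≤ c + ε := by
  classical
  obtain ⟨i₀, hi₀⟩ : ∃ i, 0 < p i := by
    by_contra! h
    have : ∑ i, p i ≤ 0 := Finset.sum_nonpos fun i _ => h i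
    linarith
  obtain ⟨r₁, hr₁⟩ := hne
  have hM : 0 ≤ M := (hR0 r₁ hr₁ i₀).trans (hRM r₁ hr₁ i₀)
  by_cases hdeg : ∃ i, 0 < p i ∧ ∀ r ∈ R, r i = 0
  · obtain ⟨i, hpi, hi⟩ := hdeg
    set q : ℝ := Fintype.card ι * M + 1 with hq
    have hq0 : 0 < q := by positivity
    refine ⟨fun j => if j = i then (Real.log q - c) / p i else 0, q, hq0, ?_, ?_⟩
    · intro r hr
      calc _ ≤ ∑ _j : ι, M := by
            refine Finset.sum_le_sum fun j _ => ?_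
            by_cases hj : j = i
            · subst hj; simp [hi r hr, hM]
            · simp [hj, hRM r hr j]
        _ ≤ q := by simp [hq]
    · simp only [mul_ite, mul_zero, Finset.sum_ite_eq', Finset.mem_univ, if_true]
      rw [mul_div_cancel₀ _ hpi.ne']
      linarith
  push Not at hdeg
  -- interior point
  have hex : ∀ i, ∃ r ∈ R, 0 < p i → 0 < r i := by
    intro i
    by_cases h : 0 < p i
    · obtain ⟨r, hr, hr'⟩ := hdeg i h
      exact ⟨r, hr, fun _ => lt_of_le_of_ne (hR0 r hr i) (Ne.symm hr')⟩
    · exact ⟨r₁, hr₁, fun h' => absurd h' h⟩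
  choose ρ hρR hρ using hex
  have hcard : (0:ℝ) < Fintype.card ι := by
    have : Nonempty ι := ⟨i₀⟩
    exact_mod_cast Fintype.card_pos
  obtain ⟨r₀, hr₀R, hr₀⟩ : ∃ r ∈ R, ∀ i, 0 < p i → 0 < r i := by
    refine ⟨∑ j, (Fintype.card ι : ℝ)⁻¹ • ρ j, ?_, ?_⟩
    · refine hconv.sum_mem (fun _ _ => by positivity) ?_ (fun j _ => hρR j)
      simp [hcard.ne']
    · intro i hi
      rw [Finset.sum_apply]
      refine Finset.sum_pos' (fun j _ => ?_) ⟨i, Finset.mem_univ _, ?_⟩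
      · have := hR0 _ (hρR j) i
        simp only [Pi.smul_apply, smul_eq_mul]; positivity
      · have := hρ i hi
        simp only [Pi.smul_apply, smul_eq_mul]; positivity
  obtain ⟨d, hd0, hd⟩ : ∃ d : ℝ, 0 < d ∧ ∀ i, 0 < p i → d ≤ r₀ i := by
    have : Nonempty ι := ⟨i₀⟩
    obtain ⟨j, hj⟩ := Finite.exists_min (fun i => if 0 < p i then r₀ i else 1)
    refine ⟨if 0 < p j then r₀ j else 1, ?_, ?_⟩
    · split_ifs with h
      · exact hr₀ j h
      · exact one_pos
    · intro i hi
      have := hj i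
      simpa only [hi, if_true] using this
  set κ : ℝ := min (ε / 5) (1 / 2) with hκ
  have hκ0 : 0 < κ := lt_min (by positivity) (by norm_num)
  have hκ1 : κ ≤ 1 / 2 := min_le_right _ _
  have hκε : 5 * κ ≤ ε := by have := min_le_left (ε / 5) (1 / 2 : ℝ); linarith
  set B : ℝ := M / (κ * d) with hB
  have hB0 : 0 ≤ B := by positivity
  set u : ℝ := κ / (2 * (1 + B) ^ 2) with hu
  have hu0 : 0 < u := by positivity
  have hu1 : u * (1 + 2 * B ^ 2) ≤ κ := by
    rw [hu, div_mul_eq_mul_div, div_le_iff₀ (by positivity)]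
    nlinarith
  have hu2 : u * B ≤ 1 / 2 := by
    rw [hu, div_mul_eq_mul_div, div_le_iff₀ (by positivity)]
    nlinarith
  have hu3 : u ≤ 1 := by
    rw [hu, div_le_iff₀ (by positivity)]
    nlinarith
  set F : (ι → ℝ) → ℝ := fun r => ∑ i, p i * Real.log (r i / p i) with hF
  let Rs : Set (ι → ℝ) := {r | r ∈ R ∧ ∀ i, 0 < p i → κ * d ≤ r i}
  have hRsconv : Convex ℝ Rs := by
    intro x hx y hy a b ha hb hab
    refine ⟨hconv hx.1 hy.1 ha hb hab, fun i hi => ?_⟩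
    have h1 := hx.2 i hi
    have h2 := hy.2 i hi
    simp only [Pi.add_apply, Pi.smul_apply, smul_eq_mul]
    calc κ * d = a * (κ * d) + b * (κ * d) := by rw [← add_mul, hab, one_mul]
      _ ≤ _ := by gcongr
  have hmix : ∀ r ∈ R, (1 - κ) • r + κ • r₀ ∈ Rs := by
    intro r hr
    refine ⟨hconv hr hr₀R (by linarith) hκ0.le (by ring), fun i hi => ?_⟩
    simp only [Pi.add_apply, Pi.smul_apply, smul_eq_mul]
    have h1 := hR0 r hr i
    have h2 := mul_le_mul_of_nonneg_left (hd i hi) hκ0.le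
    have : 0 ≤ (1 - κ) * r i := mul_nonneg (by linarith) h1
    linarith
  have hFc : ∀ r ∈ Rs, F r ≤ c := by
    intro r hr
    have h := hc r hr.1
    have h2 : ∑ i, entTerm (p i) (r i) = ((F r : ℝ) : EReal) := by
      rw [hF, aux_coe_sum]
      refine Finset.sum_congr rfl fun i _ => ?_
      unfold entTerm
      split_ifs with h1 h2
      · simp [h1]
      · have hpi : 0 < p i := lt_of_le_of_ne (hp i) (Ne.symm h1)
        have := hr.2 i hpi
        rw [h2] at this
        have : 0 < κ * d := by positivity
        linarith
      · rfl
    rw [h2] at h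
    exact_mod_cast h
  have hbdd : BddAbove (F '' Rs) := ⟨c, by rintro _ ⟨r, hr, rfl⟩; exact hFc r hr⟩
  have hne' : (F '' Rs).Nonempty := ⟨_, _, hmix r₁ hr₁, rfl⟩
  obtain ⟨_, ⟨rs, hrs, rfl⟩, hlt⟩ := exists_lt_of_lt_csSup hne'
    (show sSup (F '' Rs) - u ^ 2 < sSup (F '' Rs) by have : 0 < u ^ 2 := by positivity
                                                     linarith)
  have hkd : 0 < κ * d := by positivity
  have hrspos : ∀ i, 0 < p i → 0 < rs i := fun i hi => hkd.trans_le (hrs.2 i hi)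
  -- first order condition
  have hfo : ∀ r ∈ Rs, ∑ i, p i * (r i / rs i) ≤ 1 + κ := by
    intro r hr
    have hru : (1 - u) • rs + u • r ∈ Rs := hRsconv hrs hr (by linarith) hu0.le (by ring)
    have h1 : F ((1 - u) • rs + u • r) ≤ sSup (F '' Rs) := le_csSup hbdd ⟨_, hru, rfl⟩
    have h2 : ∀ i, p i * (u * (r i / rs i - 1) - 2 * (u ^ 2 * B ^ 2)) ≤
        p i * Real.log (((1 - u) • rs + u • r) i / p i) - p i * Real.log (rs i / p i) := by
      intro i
      rcases (hp i).eq_or_lt with h0 | hpi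
      · simp [← h0]
      rw [← mul_sub]
      refine mul_le_mul_of_nonneg_left ?_ (hp i)
      have hrsi := hrspos i hpi
      have hri : 0 < r i := hkd.trans_le (hr.2 i hpi)
      have hruipos : 0 < ((1 - u) • rs + u • r) i := hkd.trans_le (hru.2 i hpi)
      rw [← Real.log_div (by positivity) (by positivity)]
      have he : ((1 - u) • rs + u • r) i / p i / (rs i / p i) = 1 + u * (r i / rs i - 1) := by
        simp only [Pi.add_apply, Pi.smul_apply, smul_eq_mul]
        field_simp; ring
      rw [he]
      have habs : |r i / rs i - 1| ≤ B := by
        have e : r i / rs i - 1 = (r i - rs i) / rs i := by field_simp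
        rw [e, abs_div, abs_of_pos hrsi, hB]
        have : |r i - rs i| ≤ M := by
          have := hRM r hr.1 i
          have := hRM rs hrs.1 i
          rw [abs_le]; constructor <;> linarith
        exact div_le_div₀ hM this hkd (hrs.2 i hpi)
      have hyabs : |u * (r i / rs i - 1)| ≤ u * B := by
        rw [abs_mul, abs_of_pos hu0]; gcongr
      have h3 := aux_log_lower (u * (r i / rs i - 1)) (by
        have := neg_abs_le (u * (r i / rs i - 1)); linarith)
      have h4 : (u * (r i / rs i - 1)) ^ 2 ≤ u ^ 2 * B ^ 2 := by
        rw [← mul_pow, ← sq_abs]; gcongr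
      linarith
    have h3 := Finset.sum_le_sum fun i (_ : i ∈ Finset.univ) => h2 i
    rw [Finset.sum_sub_distrib] at h3
    have h4 : ∑ i, p i * (u * (r i / rs i - 1) - 2 * (u ^ 2 * B ^ 2))
        = u * ((∑ i, p i * (r i / rs i)) - 1) - 2 * (u ^ 2 * B ^ 2) := by
      have : ∀ i, p i * (u * (r i / rs i - 1) - 2 * (u ^ 2 * B ^ 2)) =
        u * (p i * (r i / rs i)) - p i * u - p i * (2 * (u ^ 2 * B ^ 2)) := fun i => by ring
      simp only [this]
      rw [Finset.sum_sub_distrib, Finset.sum_sub_distrib, ← Finset.mul_sum, ← Finset.sum_mul,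
        ← Finset.sum_mul, hs]
      ring
    rw [h4] at h3
    have h5 : u * ((∑ i, p i * (r i / rs i)) - 1) ≤ u * κ := by
      have : u * (u * (1 + 2 * B ^ 2)) ≤ u * κ := by gcongr
      simp only [hF] at h1 hlt
      nlinarith
    have := le_of_mul_le_mul_left h5 hu0
    linarith
  have hfo2 : ∀ r ∈ R, ∑ i, p i * (r i / rs i) ≤ 1 + 4 * κ := by
    intro r hr
    have h := hfo _ (hmix r hr)
    have h1 : (1 - κ) * ∑ i, p i * (r i / rs i) ≤ 1 + κ := by
      refine le_trans ?_ h
      rw [Finset.mul_sum]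
      refine Finset.sum_le_sum fun i _ => ?_
      rcases (hp i).eq_or_lt with h0 | hpi
      · simp [← h0]
      have := hrspos i hpi
      have := hr₀ i hpi
      simp only [Pi.add_apply, Pi.smul_apply, smul_eq_mul]
      rw [add_div, mul_add, mul_div_assoc]
      have : 0 ≤ p i * (κ * r₀ i / rs i) := by positivity
      linarith
    by_contra! h2
    have : (1 - κ) * (1 + 4 * κ) < 1 + κ :=
      (mul_lt_mul_of_pos_left h2 (by linarith)).trans_le h1
    nlinarith
  set κ' : ℝ := κ / (Fintype.card ι * (M + 1)) with hκ'
  have hκ'0 : 0 < κ' := by positivity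
  refine ⟨fun i => if 0 < p i then Real.log (p i / rs i) else Real.log κ', 1 + 5 * κ,
    by positivity, ?_, ?_⟩
  · intro r hr
    have : ∀ i, Real.exp (if 0 < p i then Real.log (p i / rs i) else Real.log κ') * r i ≤
        p i * (r i / rs i) + κ' * (M + 1) := by
      intro i
      have hri := hR0 r hr i
      have hriM := hRM r hr i
      split_ifs with hpi
      · have := hrspos i hpi
        rw [Real.exp_log (by positivity)]
        have e : p i / rs i * r i = p i * (r i / rs i) := by ring
        have : 0 ≤ κ' * (M + 1) := by positivity
        linarith
      · have h0 : p i = 0 := le_antisymm (not_lt.1 hpi) (hp i)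
        rw [Real.exp_log hκ'0, h0, zero_mul, zero_add]
        gcongr; linarith
    refine (Finset.sum_le_sum fun i _ => this i).trans ?_
    rw [Finset.sum_add_distrib]
    have e : ∑ _i : ι, κ' * (M + 1) = κ := by
      simp only [Finset.sum_const, Finset.card_univ, nsmul_eq_mul, hκ']
      field_simp
    rw [e]
    linarith [hfo2 r hr]
  · have h1 : ∑ i, p i * (if 0 < p i then Real.log (p i / rs i) else Real.log κ') = - F rs := by
      simp only [hF, ← Finset.sum_neg_distrib]
      refine Finset.sum_congr rfl fun i _ => ?_
      split_ifs with hpi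
      · rw [← inv_div, Real.log_inv]; ring
      · have h0 : p i = 0 := le_antisymm (not_lt.1 hpi) (hp i)
        simp [h0]
    rw [h1]
    have h2 := Real.log_le_sub_one_of_pos (x := 1 + 5 * κ) (by positivity)
    have h3 := hFc rs hrs
    linarith

/-- Norm bound for the weighted operator `F ↦ w · F ∘ α^n`. -/
def WBd {X : Type*} [MeasurableSpace X] (m : Measure X) (α : X → X) (n : ℕ)
    (w : X → ℝ≥0∞) (c : ℝ≥0∞) : Prop :=
  ∀ F : X → ℝ≥0∞, AEMeasurable F m → ∫⁻ x, F x ∂m ≠ ⊤ →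
    ∫⁻ x, w x * F (α^[n] x) ∂m ≤ c * ∫⁻ x, F x ∂m

section ops

variable {X : Type*} [MeasurableSpace X] {m : Measure X} {α : X → X}

lemma aux_map_le (hα : Measurable α) {C : ℝ≥0}
    (hC : ∀ G : Set X, MeasurableSet G → m (α ⁻¹' G) ≤ (C : ℝ≥0∞) * m G) :
    m.map α ≤ (C : ℝ≥0∞) • m := by
  refine Measure.le_iff.2 fun s hs => ?_
  rw [Measure.map_apply hα hs]
  simpa using hC s hs

lemma aux_qmp (hα : Measurable α) (hb : ShiftBounded m α) :
    Measure.QuasiMeasurePreserving α m m := by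
  obtain ⟨C, _, hC⟩ := hb
  refine ⟨hα, ?_⟩
  exact (Measure.absolutelyContinuous_of_le (aux_map_le hα hC)).trans
    (Measure.smul_absolutelyContinuous)

lemma aux_const (hb : ShiftBounded m α) :
    ∃ C : ℝ≥0, 1 ≤ C ∧ ∀ G : Set X, MeasurableSet G → m (α ⁻¹' G) ≤ (C : ℝ≥0∞) * m G := by
  obtain ⟨C, _, hC⟩ := hb
  refine ⟨max C 1, le_max_right _ _, fun G hG => (hC G hG).trans ?_⟩
  gcongr
  exact le_max_left _ _

lemma WBd.comp (hq : Measure.QuasiMeasurePreserving α m m) {n k : ℕ} {w v : X → ℝ≥0∞}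
    {c d : ℝ≥0∞} (h1 : WBd m α n w c) (h2 : WBd m α k v d) (hd : d ≠ ⊤) (hv : Measurable v) :
    WBd m α (n + k) (fun x => w x * v (α^[n] x)) (c * d) := by
  intro F hF hFt
  have hmeas : AEMeasurable (fun x => v x * F (α^[k] x)) m :=
    hv.aemeasurable.mul (hF.comp_quasiMeasurePreserving (hq.iterate k))
  have e2 := h2 F hF hFt
  have e1 := h1 _ hmeas (ne_top_of_le_ne_top (ENNReal.mul_ne_top hd hFt) e2)
  calc _ = ∫⁻ x, w x * (v (α^[n] x) * F (α^[k] (α^[n] x))) ∂m := by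
        simp only [add_comm n k, Function.iterate_add_apply, mul_assoc]
    _ ≤ _ := e1
    _ ≤ c * (d * ∫⁻ x, F x ∂m) := by gcongr
    _ = _ := by rw [mul_assoc]

lemma WBd.mono {n : ℕ} {w v : X → ℝ≥0∞} {c d : ℝ≥0∞} (h : WBd m α n v c)
    (hw : ∀ᵐ x ∂m, w x ≤ v x) (hc : c ≤ d) : WBd m α n w d := by
  intro F hF hFt
  calc _ ≤ ∫⁻ x, v x * F (α^[n] x) ∂m := by
        refine lintegral_mono_ae ?_
        filter_upwards [hw] with x hx
        gcongr
    _ ≤ _ := h F hF hFt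
    _ ≤ _ := by gcongr

lemma WBd.const_mul {n : ℕ} {v : X → ℝ≥0∞} {c : ℝ≥0∞} (h : WBd m α n v c) (a : ℝ≥0∞)
    (ha : a ≠ ⊤) : WBd m α n (fun x => a * v x) (a * c) := by
  intro F hF hFt
  simp only [mul_assoc]
  rw [lintegral_const_mul' _ _ ha]
  gcongr
  exact h F hF hFt

lemma aux_WBd_iterate (hq : Measure.QuasiMeasurePreserving α m m) {C : ℝ≥0}
    (hC : ∀ G : Set X, MeasurableSet G → m (α ⁻¹' G) ≤ (C : ℝ≥0∞) * m G) (n : ℕ) :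
    WBd m α n (fun _ => 1) ((C : ℝ≥0∞) ^ n) := by
  induction n with
  | zero => intro F _ _; simp
  | succ n ih =>
    have h1 : WBd m α 1 (fun _ => 1) (C : ℝ≥0∞) := by
      intro F hF _
      simp only [one_mul, Function.iterate_one]
      rw [← lintegral_map' (hF.mono_ac hq.absolutelyContinuous) hq.measurable.aemeasurable]
      refine (lintegral_mono' (aux_map_le hq.measurable hC) le_rfl).trans ?_
      rw [lintegral_smul_measure]; rfl
    have := ih.comp hq h1 ENNReal.coe_ne_top measurable_const
    simpa [pow_succ] using this

lemma aux_integrable_comp (hq : Measure.QuasiMeasurePreserving α m m) {C : ℝ≥0}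
    (hC : ∀ G : Set X, MeasurableSet G → m (α ⁻¹' G) ≤ (C : ℝ≥0∞) * m G) (n : ℕ)
    {f : X → ℝ} (hf : Integrable f m) : Integrable (fun x => f (α^[n] x)) m := by
  refine ⟨hf.1.comp_quasiMeasurePreserving (hq.iterate n), ?_⟩
  have h := aux_WBd_iterate hq hC n (fun x => ‖f x‖ₑ) hf.1.enorm hf.2.ne
  simp only [one_mul] at h
  refine lt_of_le_of_lt h (ENNReal.mul_lt_top ?_ hf.2)
  exact ENNReal.pow_lt_top ENNReal.coe_lt_top

lemma aux_integrable_weight (hq : Measure.QuasiMeasurePreserving α m m) {C : ℝ≥0}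
    (hC : ∀ G : Set X, MeasurableSet G → m (α ⁻¹' G) ≤ (C : ℝ≥0∞) * m G) (n : ℕ)
    {f W : X → ℝ} (hf : Integrable f m) (hW : AEStronglyMeasurable W m) {b : ℝ}
    (hb : ∀ᵐ x ∂m, |W x| ≤ b) : Integrable (fun x => W x * |f (α^[n] x)|) m :=
  (aux_integrable_comp hq hC n hf).abs.bdd_mul hW (c := b) (by simpa using hb)

/-- from norm bounds to `WBd` -/
lemma aux_WBd_of (hq : Measure.QuasiMeasurePreserving α m m) {C : ℝ≥0}
    (hC : ∀ G : Set X, MeasurableSet G → m (α ⁻¹' G) ≤ (C : ℝ≥0∞) * m G) (n : ℕ)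
    {W : X → ℝ} (hW : AEStronglyMeasurable W m) (hW0 : ∀ᵐ x ∂m, 0 ≤ W x) {b q : ℝ}
    (hb : ∀ᵐ x ∂m, |W x| ≤ b)
    (h : ∀ f : X → ℝ, Integrable f m → ∫ x, |f x| ∂m = 1 → ∫ x, W x * |f (α^[n] x)| ∂m ≤ q) :
    WBd m α n (fun x => ENNReal.ofReal (W x)) (ENNReal.ofReal q) := by
  intro F hF hFt
  by_cases h0 : ∫⁻ x, F x ∂m = 0
  · rw [h0, mul_zero, nonpos_iff_eq_zero]
    have h1 := (lintegral_eq_zero_iff' hF).1 h0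
    have h2 := (hq.iterate n).ae_eq_comp h1
    rw [lintegral_congr_ae (g := fun _ => 0)]
    · simp
    · filter_upwards [h2] with x hx
      simp only [Function.comp_apply, Pi.zero_apply] at hx
      simp [hx]
  set s : ℝ := (∫⁻ x, F x ∂m).toReal with hs
  have hs0 : 0 < s := ENNReal.toReal_pos h0 hFt
  have hIntg : Integrable (fun x => (F x).toReal) m := integrable_toReal_of_lintegral_ne_top hF hFt
  have hFfin : ∀ᵐ x ∂m, F x < ⊤ := ae_lt_top' hF hFt
  have hFn : ∀ᵐ x ∂m, F (α^[n] x) < ⊤ := (hq.iterate n).ae hFfin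
  have hi2 : Integrable (fun x => s⁻¹ * (F x).toReal) m := hIntg.const_mul _
  have hI : ∫ x, |s⁻¹ * (F x).toReal| ∂m = 1 := by
    have : ∀ x, |s⁻¹ * (F x).toReal| = s⁻¹ * (F x).toReal := fun x => abs_of_nonneg (by positivity)
    simp only [this]
    rw [integral_const_mul, integral_toReal hF hFfin, ← hs, inv_mul_cancel₀ hs0.ne']
  have h1 := h _ hi2 hI
  have hi3 := aux_integrable_weight hq hC n hi2 hW hb
  have h2 := ofReal_integral_eq_lintegral_ofReal hi3 (by
    filter_upwards [hW0] with x hx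
    simp only [Pi.zero_apply]; positivity)
  have h3 : ∫⁻ x, ENNReal.ofReal (W x) * F (α^[n] x) ∂m
      = ENNReal.ofReal s * ∫⁻ x, ENNReal.ofReal (W x * |s⁻¹ * (F (α^[n] x)).toReal|) ∂m := by
    rw [← lintegral_const_mul' _ _ ENNReal.ofReal_ne_top]
    refine lintegral_congr_ae ?_
    filter_upwards [hW0, hFn] with x hx hx2
    rw [← ENNReal.ofReal_mul hs0.le, abs_of_nonneg (by positivity)]
    have : s * (W x * (s⁻¹ * (F (α^[n] x)).toReal)) = W x * (F (α^[n] x)).toReal := by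
      field_simp
    rw [this, ENNReal.ofReal_mul hx, ENNReal.ofReal_toReal hx2.ne]
  rw [h3, ← h2, mul_comm]
  have h4 : ENNReal.ofReal s = ∫⁻ x, F x ∂m := ENNReal.ofReal_toReal hFt
  rw [h4]
  gcongr

lemma aux_of_WBd (n : ℕ) {W : X → ℝ}
    (hq : Measure.QuasiMeasurePreserving α m m)
    (hW : AEStronglyMeasurable W m) (hW0 : ∀ᵐ x ∂m, 0 ≤ W x) {q : ℝ} (hq0 : 0 ≤ q)
    (h : WBd m α n (fun x => ENNReal.ofReal (W x)) (ENNReal.ofReal q))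
    {f : X → ℝ} (hf : Integrable f m) (hf1 : ∫ x, |f x| ∂m = 1) :
    ∫ x, W x * |f (α^[n] x)| ∂m ≤ q := by
  have h0 := ofReal_integral_eq_lintegral_ofReal hf.abs (Eventually.of_forall fun x => abs_nonneg _)
  rw [hf1, ENNReal.ofReal_one] at h0
  have h1 := h (fun x => ENNReal.ofReal |f x|) hf.abs.1.aemeasurable.ennreal_ofReal (by
    rw [← h0]; exact ENNReal.one_ne_top)
  rw [← h0, mul_one] at h1
  have hm := (hf.1.comp_quasiMeasurePreserving (hq.iterate n))
  rw [integral_eq_lintegral_of_nonneg_ae]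
  · refine ENNReal.toReal_le_of_le_ofReal hq0 (le_trans (le_of_eq ?_) h1)
    refine lintegral_congr_ae ?_
    filter_upwards [hW0] with x hx
    rw [ENNReal.ofReal_mul hx]
  · filter_upwards [hW0] with x hx
    simp only [Pi.zero_apply]; positivity
  · exact hW.mul hm.norm

lemma aux_ae_bound (φ : Lp ℝ ⊤ m) : ∀ᵐ x ∂m, |φ x| ≤ ‖φ‖ := by
  have h := (Lp.memLp φ)
  have h1 := enorm_ae_le_eLpNormEssSup φ m
  filter_upwards [h1] with x hx
  rw [← eLpNorm_exponent_top] at hx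
  rw [Lp.norm_def, ← Real.norm_eq_abs, ← toReal_enorm]
  exact ENNReal.toReal_mono h.2.ne hx

lemma aux_meas (φ : Lp ℝ ⊤ m) : Measurable φ := (Lp.stronglyMeasurable φ).measurable

/-- Birkhoff sums are bounded. -/
lemma aux_birk_bound (hq : Measure.QuasiMeasurePreserving α m m) (φ : Lp ℝ ⊤ m) (n : ℕ) :
    ∀ᵐ x ∂m, |birkhoff α φ n x| ≤ n * ‖φ‖ := by
  have : ∀ᵐ x ∂m, ∀ i : ℕ, |φ (α^[i] x)| ≤ ‖φ‖ :=
    ae_all_iff.2 fun i => (hq.iterate i).ae (aux_ae_bound φ)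
  filter_upwards [this] with x hx
  unfold birkhoff
  refine (Finset.abs_sum_le_sum_abs _ _).trans ?_
  refine (Finset.sum_le_sum fun i _ => hx i).trans ?_
  simp

lemma aux_birk_meas (hα : Measurable α) (φ : Lp ℝ ⊤ m) (n : ℕ) : Measurable (birkhoff α φ n) := by
  unfold birkhoff
  exact Finset.measurable_fun_sum _ fun i _ => (aux_meas φ).comp (hα.iterate i)

/-- The set in the definition of the norm. -/
lemma aux_norm_def (φ : X → ℝ) (n : ℕ) : weightedOpNorm m α 1 φ n =
    sSup {r : ℝ | ∃ f : X → ℝ, Integrable f m ∧ (∫ x, |f x| ∂m) = 1 ∧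
    r = ∫ x, Real.exp (birkhoff α φ n x) * |f (α^[n] x)| ∂m} := by
  simp [weightedOpNorm, birkhoff]

lemma aux_norm_nonneg (φ : X → ℝ) (n : ℕ) : 0 ≤ weightedOpNorm m α 1 φ n := by
  rw [aux_norm_def]
  refine Real.sSup_nonneg ?_
  rintro _ ⟨f, _, _, rfl⟩
  exact integral_nonneg fun x => by positivity

lemma aux_norm_le (hq : Measure.QuasiMeasurePreserving α m m) (φ : Lp ℝ ⊤ m) (n : ℕ) {q : ℝ}
    (hq0 : 0 ≤ q)
    (h : WBd m α n (fun x => ENNReal.ofReal (Real.exp (birkhoff α φ n x))) (ENNReal.ofReal q)) :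
    weightedOpNorm m α 1 φ n ≤ q := by
  rw [aux_norm_def]
  refine Real.sSup_le ?_ hq0
  rintro _ ⟨f, hf, hf1, rfl⟩
  exact aux_of_WBd n hq (aux_birk_meas hq.measurable φ n).exp.aestronglyMeasurable
    (Eventually.of_forall fun x => by positivity) hq0 h hf hf1

lemma aux_exp_bound (hq : Measure.QuasiMeasurePreserving α m m) (φ : Lp ℝ ⊤ m) (n : ℕ) :
    ∀ᵐ x ∂m, |Real.exp (birkhoff α φ n x)| ≤ Real.exp (n * ‖φ‖) := by
  filter_upwards [aux_birk_bound hq φ n] with x hx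
  rw [abs_of_pos (Real.exp_pos _), Real.exp_le_exp]
  exact (le_abs_self _).trans hx

lemma aux_WBd_apriori (hq : Measure.QuasiMeasurePreserving α m m) {C : ℝ≥0}
    (hC : ∀ G : Set X, MeasurableSet G → m (α ⁻¹' G) ≤ (C : ℝ≥0∞) * m G) (φ : Lp ℝ ⊤ m) (n : ℕ) :
    WBd m α n (fun x => ENNReal.ofReal (Real.exp (birkhoff α φ n x)))
      (ENNReal.ofReal (Real.exp (n * ‖φ‖) * (C : ℝ) ^ n)) := by
  refine ((aux_WBd_iterate hq hC n).const_mul (ENNReal.ofReal (Real.exp (n * ‖φ‖)))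
    ENNReal.ofReal_ne_top).mono ?_ ?_
  · filter_upwards [aux_exp_bound hq φ n] with x hx
    rw [mul_one]
    exact ENNReal.ofReal_le_ofReal ((le_abs_self _).trans hx)
  · rw [ENNReal.ofReal_mul (by positivity), ENNReal.ofReal_pow (by positivity),
      ENNReal.ofReal_coe_nnreal]

lemma aux_norm_bdd (hq : Measure.QuasiMeasurePreserving α m m) {C : ℝ≥0}
    (hC : ∀ G : Set X, MeasurableSet G → m (α ⁻¹' G) ≤ (C : ℝ≥0∞) * m G) (φ : Lp ℝ ⊤ m) (n : ℕ)
    {f : X → ℝ} (hf : Integrable f m) (hf1 : ∫ x, |f x| ∂m = 1) :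
    ∫ x, Real.exp (birkhoff α φ n x) * |f (α^[n] x)| ∂m ≤ weightedOpNorm m α 1 φ n := by
  rw [aux_norm_def]
  refine le_csSup ⟨Real.exp (n * ‖φ‖) * (C : ℝ) ^ n, ?_⟩ ⟨f, hf, hf1, rfl⟩
  rintro _ ⟨f, hf, hf1, rfl⟩
  exact aux_of_WBd n hq (aux_birk_meas hq.measurable φ n).exp.aestronglyMeasurable
    (Eventually.of_forall fun x => by positivity) (by positivity) (aux_WBd_apriori hq hC φ n) hf hf1

lemma aux_WBd_norm (hq : Measure.QuasiMeasurePreserving α m m) {C : ℝ≥0}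
    (hC : ∀ G : Set X, MeasurableSet G → m (α ⁻¹' G) ≤ (C : ℝ≥0∞) * m G) (φ : Lp ℝ ⊤ m) (n : ℕ) :
    WBd m α n (fun x => ENNReal.ofReal (Real.exp (birkhoff α φ n x)))
      (ENNReal.ofReal (weightedOpNorm m α 1 φ n)) :=
  aux_WBd_of hq hC n (aux_birk_meas hq.measurable φ n).exp.aestronglyMeasurable
    (Eventually.of_forall fun x => by positivity) (aux_exp_bound hq φ n)
    (fun _ hf hf1 => aux_norm_bdd hq hC φ n hf hf1)

lemma aux_birk_add (φ : X → ℝ) (n k : ℕ) (x : X) :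
    birkhoff α φ (n + k) x = birkhoff α φ n x + birkhoff α φ k (α^[n] x) := by
  unfold birkhoff
  rw [Finset.sum_range_add]
  congr 1
  refine Finset.sum_congr rfl fun i _ => ?_
  rw [add_comm n i, Function.iterate_add_apply]

lemma aux_submul (hq : Measure.QuasiMeasurePreserving α m m) {C : ℝ≥0}
    (hC : ∀ G : Set X, MeasurableSet G → m (α ⁻¹' G) ≤ (C : ℝ≥0∞) * m G) (φ : Lp ℝ ⊤ m)
    (n k : ℕ) : weightedOpNorm m α 1 φ (n + k) ≤
      weightedOpNorm m α 1 φ n * weightedOpNorm m α 1 φ k := by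
  refine aux_norm_le hq φ _ (mul_nonneg (aux_norm_nonneg _ _) (aux_norm_nonneg _ _)) ?_
  have := (aux_WBd_norm hq hC φ n).comp hq (aux_WBd_norm hq hC φ k) ENNReal.ofReal_ne_top
    (aux_birk_meas hq.measurable φ k).exp.ennreal_ofReal
  rw [ENNReal.ofReal_mul (aux_norm_nonneg _ _)]
  refine this.mono (Eventually.of_forall fun x => ?_) le_rfl
  rw [aux_birk_add, Real.exp_add, ENNReal.ofReal_mul (by positivity)]

/-- Comparison of norms for two weights. -/
lemma aux_norm_compare (hq : Measure.QuasiMeasurePreserving α m m) {C : ℝ≥0}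
    (hC : ∀ G : Set X, MeasurableSet G → m (α ⁻¹' G) ≤ (C : ℝ≥0∞) * m G) (φ ψ : Lp ℝ ⊤ m)
    (n : ℕ) (b : ℝ) (h : ∀ᵐ x ∂m, birkhoff α φ n x ≤ b + birkhoff α ψ n x) :
    weightedOpNorm m α 1 φ n ≤ Real.exp b * weightedOpNorm m α 1 ψ n := by
  refine aux_norm_le hq φ _ (mul_nonneg (Real.exp_pos _).le (aux_norm_nonneg _ _)) ?_
  rw [ENNReal.ofReal_mul (Real.exp_pos _).le]
  refine ((aux_WBd_norm hq hC ψ n).const_mul _ ENNReal.ofReal_ne_top).mono ?_ le_rfl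
  filter_upwards [h] with x hx
  rw [← ENNReal.ofReal_mul (Real.exp_pos _).le, ← Real.exp_add]
  exact ENNReal.ofReal_le_ofReal (Real.exp_le_exp.2 hx)

end ops

section upper

variable {X : Type*} [MeasurableSpace X] {m : Measure X} {α : X → X}

lemma aux_mu_mono {μ : Lp ℝ ⊤ m →L[ℝ] ℝ} (hp : IsPositiveFunctional m ⇑μ) {φ ψ : Lp ℝ ⊤ m}
    (h : ∀ᵐ x ∂m, φ x ≤ ψ x) : μ φ ≤ μ ψ := by
  have h1 := hp (ψ - φ) (by
    filter_upwards [h, Lp.coeFn_sub ψ φ] with x hx hx2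
    rw [hx2]; simpa using hx)
  rw [map_sub] at h1
  linarith

lemma aux_lp {h : X → ℝ} (hm : Measurable h) {b : ℝ} (hb : ∀ᵐ x ∂m, |h x| ≤ b) :
    ∃ ψ : Lp ℝ ⊤ m, ⇑ψ =ᵐ[m] h :=
  ⟨(memLp_top_of_bound hm.aestronglyMeasurable b hb).toLp h, MemLp.coeFn_toLp _⟩

lemma aux_coeFn_sum {ι : Type*} (s : Finset ι) (g : ι → Lp ℝ ⊤ m) :
    ∀ᵐ x ∂m, (∑ i ∈ s, g i : Lp ℝ ⊤ m) x = ∑ i ∈ s, (g i) x := by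
  classical
  induction s using Finset.induction_on with
  | empty =>
    filter_upwards [Lp.coeFn_zero ℝ ⊤ m] with x hx
    simpa using hx
  | insert a s ha ih =>
    rw [Finset.sum_insert ha]
    filter_upwards [ih, Lp.coeFn_add (g a) (∑ i ∈ s, g i)] with x hx hx2
    rw [hx2, Finset.sum_insert ha, Pi.add_apply, hx]

/-- pointwise form of linear combinations -/
lemma aux_coeFn_lin {ι : Type*} [Fintype ι] (g : ι → Lp ℝ ⊤ m) (t : ι → ℝ) :
    ∀ᵐ x ∂m, (∑ i, t i • g i : Lp ℝ ⊤ m) x = ∑ i, t i * (g i) x := by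
  have h : ∀ᵐ x ∂m, ∀ i, (t i • g i : Lp ℝ ⊤ m) x = t i * (g i) x := by
    refine ae_all_iff.2 fun i => ?_
    filter_upwards [Lp.coeFn_smul (t i) (g i)] with x hx
    simpa using hx
  filter_upwards [h, aux_coeFn_sum Finset.univ fun i => t i • g i] with x hx hx2
  rw [hx2]
  exact Finset.sum_congr rfl fun i _ => hx i

lemma aux_inv (hq : Measure.QuasiMeasurePreserving α m m) {μ : Lp ℝ ⊤ m →L[ℝ] ℝ}
    (hi : IsInvariantFunctional m α ⇑μ) (φ : Lp ℝ ⊤ m) (n : ℕ) :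
    ∀ ψ : Lp ℝ ⊤ m, (⇑ψ =ᵐ[m] fun x => φ (α^[n] x)) → μ ψ = μ φ := by
  induction n with
  | zero => intro ψ h; rw [Lp.ext (f := ψ) (g := φ) (by simpa using h)]
  | succ n ih =>
    intro ψ h
    obtain ⟨χ, hχ⟩ := aux_lp (m := m) (h := fun x => φ (α^[n] x)) (b := ‖φ‖)
      ((aux_meas φ).comp (hq.measurable.iterate n)) ((hq.iterate n).ae (aux_ae_bound φ))
    rw [← ih χ hχ]
    refine hi χ ψ ?_
    filter_upwards [h, hq.ae hχ] with x hx hx2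
    rw [hx, hx2, Function.iterate_succ_apply]

lemma aux_birk_mu (hq : Measure.QuasiMeasurePreserving α m m) {μ : Lp ℝ ⊤ m →L[ℝ] ℝ}
    (hi : IsInvariantFunctional m α ⇑μ) (φ : Lp ℝ ⊤ m) (n : ℕ) :
    ∀ ψ : Lp ℝ ⊤ m, (⇑ψ =ᵐ[m] birkhoff α φ n) → μ ψ = n * μ φ := by
  induction n with
  | zero =>
    intro ψ h
    have : ψ = 0 := Lp.ext (by
      filter_upwards [h, Lp.coeFn_zero ℝ ⊤ m] with x hx hx2
      rw [hx, hx2]; simp [birkhoff])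
    simp [this]
  | succ n ih =>
    intro ψ h
    obtain ⟨χ, hχ⟩ := aux_lp (m := m) (h := fun x => φ (α^[n] x)) (b := ‖φ‖)
      ((aux_meas φ).comp (hq.measurable.iterate n)) ((hq.iterate n).ae (aux_ae_bound φ))
    obtain ⟨ω, hω⟩ := aux_lp (aux_birk_meas hq.measurable φ n) (aux_birk_bound hq φ n)
    have : ψ = ω + χ := Lp.ext (by
      filter_upwards [h, hχ, hω, Lp.coeFn_add ω χ] with x h1 h2 h3 h4
      rw [h1, h4, Pi.add_apply, h2, h3]
      simp [birkhoff, Finset.sum_range_succ])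
    rw [this, map_add, ih ω hω, aux_inv hq hi φ n χ hχ]
    push_cast; ring

lemma aux_mu_partition {μ : Lp ℝ ⊤ m →L[ℝ] ℝ} (hn : IsNormalizedFunctional m ⇑μ)
    (D : PartUnity m) : ∑ i, μ (D.g i) = 1 := by
  rw [← map_sum]
  refine hn _ ?_
  filter_upwards [D.sum_one, aux_coeFn_sum Finset.univ D.g] with x hx hx2
  rw [hx2, hx]

lemma aux_g_le_one (D : PartUnity m) (i : Fin D.k) : ∀ᵐ x ∂m, |D.g i x| ≤ 1 := by
  filter_upwards [D.sum_one, ae_all_iff.2 D.nonneg] with x hx hx2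
  rw [abs_of_nonneg (hx2 i), ← hx]
  exact Finset.single_le_sum (f := fun i => (D.g i) x) (fun j _ => hx2 j) (Finset.mem_univ i)

lemma aux_upper (hq : Measure.QuasiMeasurePreserving α m m) {C : ℝ≥0}
    (hC : ∀ G : Set X, MeasurableSet G → m (α ⁻¹' G) ≤ (C : ℝ≥0∞) * m G)
    {μ : Lp ℝ ⊤ m →L[ℝ] ℝ} (hμ : MemMalpha m α ⇑μ) (φ : Lp ℝ ⊤ m) (n : ℕ) (c : ℝ) (hc : 0 < c)
    (hle : weightedOpNorm m α 1 φ n ≤ c) (ε : ℝ) (hε : 0 < ε) :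
    ∃ D : PartUnity m, tauN m α ⇑μ n D ≤ ((Real.log c - n * μ φ + ε : ℝ) : EReal) := by
  obtain ⟨hpos, hnorm, hinv⟩ := hμ
  set h : X → ℝ := birkhoff α φ n with hh
  have hmeas : Measurable h := aux_birk_meas hq.measurable φ n
  set b : ℝ := n * ‖φ‖ with hb
  have hbd : ∀ᵐ x ∂m, |h x| ≤ b := aux_birk_bound hq φ n
  set fl : X → ℕ := fun x => ⌊(h x + b) / ε⌋₊ with hfl
  have hflm : Measurable fl := Nat.measurable_floor.comp ((hmeas.add_const b).div_const ε)
  have hAm : ∀ i : ℕ, MeasurableSet {x | fl x = i} := fun i => hflm (measurableSet_singleton i)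
  have hex : ∀ i : ℕ, ∃ g : Lp ℝ ⊤ m, ⇑g =ᵐ[m] fun x => if fl x = i then (1:ℝ) else 0 := by
    intro i
    refine aux_lp (b := 1) (Measurable.ite (hAm i) measurable_const measurable_const) ?_
    refine Eventually.of_forall fun x => ?_
    split_ifs <;> simp
  choose G hG using hex
  have hG' := ae_all_iff.2 hG
  set K : ℕ := ⌊(2 * b) / ε⌋₊ + 1 with hK
  have hflK : ∀ x, |h x| ≤ b → fl x < K := by
    intro x hx
    refine Nat.lt_succ_of_le (Nat.floor_le_floor ?_)
    have := (abs_le.1 hx).2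
    gcongr; linarith
  have hsum : ∀ (x : X) (v : ℕ → ℝ), |h x| ≤ b →
      ∑ i : Fin K, v i * (if fl x = (i : ℕ) then (1:ℝ) else 0) = v (fl x) := by
    intro x v hx
    rw [Finset.sum_eq_single (⟨fl x, hflK x hx⟩ : Fin K)]
    · simp
    · intro j _ hj
      rw [if_neg, mul_zero]
      intro h'
      exact hj (Fin.ext h'.symm)
    · simp
  let D : PartUnity m :=
    { k := K
      g := fun i => G i
      nonneg := by
        intro i
        filter_upwards [hG i] with x hx
        rw [hx]; dsimp only [Pi.zero_apply]
        split_ifs <;> simp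
      sum_one := by
        filter_upwards [hG', hbd] with x hx hx2
        have := hsum x (fun _ => 1) hx2
        simp only [one_mul] at this
        rw [← this]
        exact Finset.sum_congr rfl fun i _ => hx i }
  refine ⟨D, ?_⟩
  let v : ℕ → ℝ := fun i => -b + i * ε
  have hv : ∀ x, |h x| ≤ b → v (fl x) ≤ h x ∧ h x ≤ v (fl x) + ε := by
    intro x hx
    have h0 : 0 ≤ (h x + b) / ε := div_nonneg (by linarith [(abs_le.1 hx).1]) hε.le
    have h1 := Nat.floor_le h0
    have h2 := (Nat.lt_floor_add_one ((h x + b) / ε)).le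
    rw [le_div_iff₀ hε] at h1
    rw [div_le_iff₀ hε] at h2
    simp only [v, hfl]
    constructor <;> linarith
  have hs : ∑ i : Fin K, μ (G i) = 1 := aux_mu_partition hnorm D
  have hmu : n * μ φ ≤ ∑ i : Fin K, μ (G i) * v i + ε := by
    obtain ⟨ψ, hψ⟩ := aux_lp hmeas hbd
    rw [← aux_birk_mu hq hinv φ n ψ hψ]
    have h1 : μ ψ ≤ μ (∑ i : Fin K, (v i + ε) • G i) := by
      refine aux_mu_mono hpos ?_
      filter_upwards [hψ, hG', hbd, aux_coeFn_lin (fun i : Fin K => G i) (fun i => v i + ε)]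
        with x h1 h2 h3 h4
      rw [h4, h1]
      have : ∑ i : Fin K, (v i + ε) * (G i) x
          = ∑ i : Fin K, (v i + ε) * (if fl x = (i : ℕ) then (1:ℝ) else 0) :=
        Finset.sum_congr rfl fun i _ => by rw [h2 i]
      rw [this, hsum x (fun i => v i + ε) h3]
      exact (hv x h3).2
    refine h1.trans (le_of_eq ?_)
    rw [map_sum]
    simp only [map_smul, smul_eq_mul, add_mul]
    rw [Finset.sum_add_distrib, ← Finset.mul_sum, hs, mul_one]
    simp only [mul_comm]
  unfold tauN
  refine sSup_le ?_
  rintro _ ⟨f, hf, hf1, rfl⟩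
  have hle2 : ∑ i : Fin K, Real.exp (v i) * ∫ x, (G i) x * |f (α^[n] x)| ∂m ≤ c := by
    refine le_trans ?_ ((aux_norm_bdd hq hC φ n hf hf1).trans hle)
    have hIntg : ∀ i : Fin K, Integrable (fun x => (G i) x * |f (α^[n] x)|) m := fun i =>
      aux_integrable_weight hq hC n hf (aux_meas _).aestronglyMeasurable (aux_g_le_one D i)
    have e : ∑ i : Fin K, Real.exp (v i) * ∫ x, (G i) x * |f (α^[n] x)| ∂m
        = ∫ x, ∑ i : Fin K, Real.exp (v i) * ((G i) x * |f (α^[n] x)|) ∂m := by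
      rw [integral_finsetSum _ fun i _ => (hIntg i).const_mul _]
      simp only [integral_const_mul]
    rw [e]
    refine integral_mono_ae (integrable_finsetSum _ fun i _ => (hIntg i).const_mul _)
      (aux_integrable_weight hq hC n hf hmeas.exp.aestronglyMeasurable (aux_exp_bound hq φ n)) ?_
    filter_upwards [hG', hbd] with x h2 h3
    have : ∑ i : Fin K, Real.exp (v i) * ((G i) x * |f (α^[n] x)|)
        = (∑ i : Fin K, Real.exp (v i) * (if fl x = (i : ℕ) then (1:ℝ) else 0))
          * |f (α^[n] x)| := by
      rw [Finset.sum_mul]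
      exact Finset.sum_congr rfl fun i _ => by rw [h2 i]; ring
    rw [this, hsum x (fun i => Real.exp (v i)) h3]
    gcongr
    exact (hv x h3).1
  have hj := aux_jensen (fun i : Fin K => μ (G i))
    (fun i => ∫ x, (G i) x * |f (α^[n] x)| ∂m) (fun i => v i) c
    (fun i => hpos _ (D.nonneg i)) (fun i => integral_nonneg_of_ae (by
      filter_upwards [D.nonneg i] with x hx
      exact mul_nonneg hx (abs_nonneg _))) hc hs hle2
  refine le_trans hj ?_
  rw [EReal.coe_le_coe_iff]
  linarith

lemma aux_upper' (hq : Measure.QuasiMeasurePreserving α m m) {C : ℝ≥0}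
    (hC : ∀ G : Set X, MeasurableSet G → m (α ⁻¹' G) ≤ (C : ℝ≥0∞) * m G)
    {μ : Lp ℝ ⊤ m →L[ℝ] ℝ} (hμ : MemMalpha m α ⇑μ) (φ : Lp ℝ ⊤ m) (n : ℕ) (hn : 0 < n)
    (c : ℝ) (hc : 0 < c) (hle : weightedOpNorm m α 1 φ n ≤ c) :
    tEntropy m α ⇑μ ≤ ((Real.log c / n - μ φ : ℝ) : EReal) := by
  rw [← EReal.le_of_forall_lt_iff_le]
  intro z hz
  rw [EReal.coe_lt_coe_iff] at hz
  have hn' : (0:ℝ) < n := by exact_mod_cast hn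
  obtain ⟨D, hD⟩ := aux_upper hq hC hμ φ n c hc hle (n * (z - (Real.log c / n - μ φ)))
    (mul_pos hn' (by linarith))
  unfold tEntropy
  refine (iInf₂_le n hn).trans ((iInf_le _ D).trans ?_)
  calc _ ≤ (((n : ℝ)⁻¹ : ℝ) : EReal) *
        ((Real.log c - n * μ φ + n * (z - (Real.log c / n - μ φ)) : ℝ) : EReal) :=
        mul_le_mul_of_nonneg_left hD (by exact_mod_cast (by positivity : (0:ℝ) ≤ (n:ℝ)⁻¹))
    _ = _ := by
      rw [← EReal.coe_mul]
      congr 1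
      field_simp
      ring

end upper

section lower

variable {X : Type*} [MeasurableSpace X] {m : Measure X} {α : X → X}

lemma WBd.sum {ι : Type*} (s : Finset ι) {n : ℕ} {w : ι → X → ℝ≥0∞} {c : ι → ℝ≥0∞}
    (hq : Measure.QuasiMeasurePreserving α m m)
    (hw : ∀ i, Measurable (w i)) (h : ∀ i ∈ s, WBd m α n (w i) (c i)) :
    WBd m α n (fun x => ∑ i ∈ s, w i x) (∑ i ∈ s, c i) := by
  intro F hF hFt
  simp only [Finset.sum_mul]
  rw [lintegral_finsetSum' (f := fun i x => w i x * F (α^[n] x)) _ fun i _ =>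
    (hw i).aemeasurable.mul (hF.comp_quasiMeasurePreserving (hq.iterate n))]
  exact Finset.sum_le_sum fun i hi => h i hi F hF hFt

lemma aux_sum_reorg (f : ℕ → ℝ) (n N : ℕ) :
    ∑ l ∈ Finset.range (n * N), f l =
      ∑ j ∈ Finset.range n, ∑ i ∈ Finset.range N, f (n * i + j) := by
  induction N with
  | zero => simp
  | succ N ih =>
    rw [Nat.mul_succ, Finset.sum_range_add, ih, ← Finset.sum_add_distrib]
    exact Finset.sum_congr rfl fun j _ => (Finset.sum_range_succ _ _).symm

/-- Birkhoff sums of the iterate `α^n` -/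
def auxH (α : X → X) (ψ : X → ℝ) (n N : ℕ) (x : X) : ℝ :=
  ∑ i ∈ Finset.range N, ψ (α^[n * i] x)

lemma auxH_meas (hα : Measurable α) (ψ : Lp ℝ ⊤ m) (n N : ℕ) : Measurable (auxH α ψ n N) := by
  unfold auxH
  exact Finset.measurable_fun_sum _ fun i _ => (aux_meas ψ).comp (hα.iterate _)

lemma auxH_WBd (hq : Measure.QuasiMeasurePreserving α m m) (ψ : Lp ℝ ⊤ m) (n : ℕ) (q : ℝ)
    (h : WBd m α n (fun x => ENNReal.ofReal (Real.exp (ψ x))) (ENNReal.ofReal q)) (N : ℕ) :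
    WBd m α (n * N) (fun x => ENNReal.ofReal (Real.exp (auxH α ψ n N x)))
      (ENNReal.ofReal q ^ N) := by
  induction N with
  | zero => intro F _ _; simp [auxH]
  | succ N ih =>
    have := ih.comp hq h ENNReal.ofReal_ne_top (aux_meas ψ).exp.ennreal_ofReal
    rw [Nat.mul_succ, pow_succ]
    refine this.mono (Eventually.of_forall fun x => ?_) le_rfl
    rw [← ENNReal.ofReal_mul (by positivity), ← Real.exp_add]
    simp [auxH, Finset.sum_range_succ]

lemma aux_lower_norm (hq : Measure.QuasiMeasurePreserving α m m) {C : ℝ≥0}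
    (hC : ∀ G : Set X, MeasurableSet G → m (α ⁻¹' G) ≤ (C : ℝ≥0∞) * m G) (ψ : Lp ℝ ⊤ m)
    (n : ℕ) (hn : 0 < n) (q : ℝ) (hq0 : 0 < q)
    (h : WBd m α n (fun x => ENNReal.ofReal (Real.exp (ψ x))) (ENNReal.ofReal q)) (N : ℕ) :
    weightedOpNorm m α 1 (((n : ℝ)⁻¹ • ψ : Lp ℝ ⊤ m)) (n * (N + 1)) ≤
      (n * Real.exp ‖ψ‖ * (C : ℝ) ^ n) * q ^ N := by
  refine aux_norm_le hq _ _ (by positivity) ?_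
  have hn' : (0:ℝ) < n := by exact_mod_cast hn
  have hj : ∀ j ∈ Finset.range n, WBd m α (n * (N + 1))
      (fun x => ENNReal.ofReal (Real.exp ‖ψ‖) *
        ENNReal.ofReal (Real.exp (auxH α ψ n N (α^[j] x))))
      (ENNReal.ofReal (Real.exp ‖ψ‖) * ((C : ℝ≥0∞) ^ n * ENNReal.ofReal q ^ N)) := by
    intro j hj
    have hj' : j < n := Finset.mem_range.1 hj
    have h1 := ((aux_WBd_iterate hq hC j).comp hq (auxH_WBd hq ψ n q h N)
      (ENNReal.pow_ne_top ENNReal.ofReal_ne_top)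
      (auxH_meas hq.measurable ψ n N).exp.ennreal_ofReal).comp hq
      (aux_WBd_iterate hq hC (n - j)) (ENNReal.pow_ne_top ENNReal.coe_ne_top) measurable_const
    have e1 : j + n * N + (n - j) = n * (N + 1) := by
      rw [Nat.mul_succ]; omega
    have e2 : (C : ℝ≥0∞) ^ j * ENNReal.ofReal q ^ N * (C : ℝ≥0∞) ^ (n - j)
        = (C : ℝ≥0∞) ^ n * ENNReal.ofReal q ^ N := by
      rw [mul_right_comm, ← pow_add, Nat.add_sub_cancel' hj'.le]
    rw [e1, e2] at h1
    simp only [one_mul, mul_one] at h1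
    exact h1.const_mul _ ENNReal.ofReal_ne_top
  have hsum := WBd.sum (Finset.range n) hq (fun j => by
    exact ((auxH_meas hq.measurable ψ n N).exp.ennreal_ofReal.comp
      (hq.measurable.iterate j)).const_mul _) hj
  refine hsum.mono ?_ (le_of_eq ?_)
  · have hb : ∀ᵐ x ∂m, ∀ i : ℕ, |ψ (α^[i] x)| ≤ ‖ψ‖ :=
      ae_all_iff.2 fun i => (hq.iterate i).ae (aux_ae_bound ψ)
    have hφ : ∀ᵐ x ∂m, ∀ i : ℕ,
        ((n : ℝ)⁻¹ • ψ : Lp ℝ ⊤ m) (α^[i] x) = (n : ℝ)⁻¹ * ψ (α^[i] x) :=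
      ae_all_iff.2 fun i => (hq.iterate i).ae (p := fun y =>
        ((n : ℝ)⁻¹ • ψ : Lp ℝ ⊤ m) y = (n : ℝ)⁻¹ * ψ y) (by
          filter_upwards [Lp.coeFn_smul (n : ℝ)⁻¹ ψ] with x hx
          simpa using hx)
    filter_upwards [hb, hφ] with x hx hx2
    have e : birkhoff α ((n : ℝ)⁻¹ • ψ : Lp ℝ ⊤ m) (n * (N + 1)) x =
        ∑ j ∈ Finset.range n, (n : ℝ)⁻¹ • auxH α ψ n (N + 1) (α^[j] x) := by
      unfold birkhoff
      rw [aux_sum_reorg]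
      refine Finset.sum_congr rfl fun j _ => ?_
      rw [auxH, smul_eq_mul, Finset.mul_sum]
      refine Finset.sum_congr rfl fun i _ => ?_
      rw [hx2, Function.iterate_add_apply]
    rw [e]
    have hcv := convexOn_exp.map_sum_le (t := Finset.range n) (w := fun _ => (n : ℝ)⁻¹)
      (p := fun j => auxH α ψ n (N + 1) (α^[j] x)) (fun _ _ => by positivity)
      (by simp [hn'.ne']) (fun _ _ => Set.mem_univ _)
    have hle : ∑ j ∈ Finset.range n, (n : ℝ)⁻¹ • Real.exp (auxH α ψ n (N + 1) (α^[j] x)) ≤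
        ∑ j ∈ Finset.range n, Real.exp ‖ψ‖ * Real.exp (auxH α ψ n N (α^[j] x)) := by
      refine Finset.sum_le_sum fun j _ => ?_
      have h1 : (n : ℝ)⁻¹ ≤ 1 := inv_le_one_of_one_le₀ (by exact_mod_cast hn)
      rw [smul_eq_mul, ← Real.exp_add]
      refine (mul_le_of_le_one_left (Real.exp_pos _).le h1).trans (Real.exp_le_exp.2 ?_)
      rw [auxH, Finset.sum_range_succ, ← Function.iterate_add_apply]
      have := (le_abs_self _).trans (hx (n * N + j))
      unfold auxH
      linarith
    refine (ENNReal.ofReal_le_ofReal (hcv.trans hle)).trans (le_of_eq ?_)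
    rw [ENNReal.ofReal_sum_of_nonneg fun j _ => by positivity]
    exact Finset.sum_congr rfl fun j _ => ENNReal.ofReal_mul (Real.exp_pos _).le
  · rw [Finset.sum_const, Finset.card_range, nsmul_eq_mul, ENNReal.ofReal_mul (by positivity),
      ENNReal.ofReal_mul (by positivity), ENNReal.ofReal_mul (by positivity),
      ENNReal.ofReal_pow (by positivity), ENNReal.ofReal_pow hq0.le, ENNReal.ofReal_coe_nnreal,
      ENNReal.ofReal_natCast]
    ring

/-- Regular case: the spectral potential is a genuine limit. -/
lemma aux_regular (hq : Measure.QuasiMeasurePreserving α m m) {C : ℝ≥0}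
    (hC : ∀ G : Set X, MeasurableSet G → m (α ⁻¹' G) ≤ (C : ℝ≥0∞) * m G)
    (hpos : ∀ k, 0 < weightedOpNorm m α 1 (0 : Lp ℝ ⊤ m) k)
    (hbd : BddBelow (Set.range fun k : ℕ =>
      Real.log (weightedOpNorm m α 1 (0 : Lp ℝ ⊤ m) k) / (k : ℝ))) (φ : Lp ℝ ⊤ m) :
    (∀ k, 0 < weightedOpNorm m α 1 φ k) ∧
    Tendsto (fun k : ℕ => Real.log (weightedOpNorm m α 1 φ k) / (k : ℝ)) atTop
      (nhds (spectralPotential m α φ)) ∧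
    ∀ k : ℕ, 0 < k → spectralPotential m α φ ≤ Real.log (weightedOpNorm m α 1 φ k) / (k : ℝ) := by
  have hcmp : ∀ k : ℕ, weightedOpNorm m α 1 (0 : Lp ℝ ⊤ m) k ≤
      Real.exp (k * ‖φ‖) * weightedOpNorm m α 1 φ k := by
    intro k
    refine aux_norm_compare hq hC 0 φ k _ ?_
    have h0 := aux_birk_bound hq (0 : Lp ℝ ⊤ m) k
    filter_upwards [aux_birk_bound hq φ k, h0] with x hx hx2
    rw [norm_zero, mul_zero] at hx2
    have := (abs_le.1 hx).1
    have := (abs_le.1 hx2).2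
    linarith
  have hp : ∀ k, 0 < weightedOpNorm m α 1 φ k := fun k =>
    pos_of_mul_pos_right ((hpos k).trans_le (hcmp k)) (Real.exp_pos _).le
  have hsub : Subadditive fun k => Real.log (weightedOpNorm m α 1 φ k) := by
    intro k l
    rw [← Real.log_mul (hp k).ne' (hp l).ne']
    exact Real.log_le_log (hp _) (aux_submul hq hC φ k l)
  have hbd' : BddBelow (Set.range fun k : ℕ =>
      Real.log (weightedOpNorm m α 1 φ k) / (k : ℝ)) := by
    obtain ⟨B, hB⟩ := hbd
    refine ⟨B - ‖φ‖, ?_⟩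
    rintro _ ⟨k, rfl⟩
    have h1 : B ≤ _ := hB ⟨k, rfl⟩
    dsimp only at h1 ⊢
    rcases Nat.eq_zero_or_pos k with rfl | hk
    · simp only [Nat.cast_zero, div_zero] at h1 ⊢
      linarith [norm_nonneg φ]
    have hk' : (0:ℝ) < k := by exact_mod_cast hk
    have h2 := Real.log_le_log (hpos k) (hcmp k)
    rw [Real.log_mul (Real.exp_pos _).ne' (hp k).ne', Real.log_exp] at h2
    rw [le_div_iff₀ hk'] at h1 ⊢
    linarith
  have ht := hsub.tendsto_lim hbd'
  have e : spectralPotential m α φ = hsub.lim := by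
    unfold spectralPotential spectralPotentialBase
    exact ht.limUnder_eq
  refine ⟨hp, e ▸ ht, fun k hk => ?_⟩
  rw [e]
  exact hsub.lim_le_div hbd' hk.ne'

lemma aux_rhs_bot {μ : Lp ℝ ⊤ m →L[ℝ] ℝ} (hn : IsNormalizedFunctional m ⇑μ) (one : Lp ℝ ⊤ m)
    (hone : ⇑one =ᵐ[m] fun _ => (1:ℝ)) (L : ℝ)
    (h : ∀ t : ℝ, spectralPotential m α (t • one : Lp ℝ ⊤ m) = L) :
    ⨅ φ : Lp ℝ ⊤ m, ((spectralPotential m α (⇑φ) - μ φ : ℝ) : EReal) = ⊥ := by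
  rw [← le_bot_iff, ← EReal.le_of_forall_lt_iff_le]
  intro z _
  refine (iInf_le _ ((L - z) • one)).trans (le_of_eq ?_)
  rw [h, map_smul, hn one hone]
  simp

lemma aux_degenerate (hq : Measure.QuasiMeasurePreserving α m m) {C : ℝ≥0}
    (hC : ∀ G : Set X, MeasurableSet G → m (α ⁻¹' G) ≤ (C : ℝ≥0∞) * m G)
    {μ : Lp ℝ ⊤ m →L[ℝ] ℝ} (hμ : MemMalpha m α ⇑μ)
    (h : ¬ ((∀ k, 0 < weightedOpNorm m α 1 (0 : Lp ℝ ⊤ m) k) ∧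
      BddBelow (Set.range fun k : ℕ =>
      Real.log (weightedOpNorm m α 1 (0 : Lp ℝ ⊤ m) k) / (k : ℝ)))) :
    tEntropy m α (⇑μ) =
      ⨅ φ : Lp ℝ ⊤ m, ((spectralPotential m α (⇑φ) - μ φ : ℝ) : EReal) := by
  obtain ⟨one, hone⟩ := aux_lp (m := m) (h := fun _ => (1:ℝ)) (b := 1) measurable_const
    (Eventually.of_forall fun x => by simp)
  have hzero : ∀ k : ℕ, ∀ᵐ x ∂m, birkhoff α (0 : Lp ℝ ⊤ m) k x = 0 := by
    intro k
    filter_upwards [aux_birk_bound hq (0 : Lp ℝ ⊤ m) k] with x hx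
    rw [norm_zero, mul_zero] at hx
    exact abs_nonpos_iff.1 hx
  have ht : ∀ (t : ℝ) (k : ℕ), ∀ᵐ x ∂m, birkhoff α (t • one : Lp ℝ ⊤ m) k x = k * t := by
    intro t k
    have h1 : ∀ᵐ x ∂m, (t • one : Lp ℝ ⊤ m) x = t := by
      filter_upwards [Lp.coeFn_smul t one, hone] with x hx hx2
      rw [hx, Pi.smul_apply, hx2]; simp
    have h2 : ∀ᵐ x ∂m, ∀ i : ℕ, (t • one : Lp ℝ ⊤ m) (α^[i] x) = t :=
      ae_all_iff.2 fun i => (hq.iterate i).ae h1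
    filter_upwards [h2] with x hx
    simp [birkhoff, hx]
  have hcmp1 : ∀ (t : ℝ) (k : ℕ), weightedOpNorm m α 1 (t • one : Lp ℝ ⊤ m) k ≤
      Real.exp (k * t) * weightedOpNorm m α 1 (0 : Lp ℝ ⊤ m) k := by
    intro t k
    refine aux_norm_compare hq hC _ _ k _ ?_
    filter_upwards [hzero k, ht t k] with x h1 h2
    rw [h1, h2, add_zero]
  have hcmp2 : ∀ (t : ℝ) (k : ℕ), weightedOpNorm m α 1 (0 : Lp ℝ ⊤ m) k ≤
      Real.exp (-(k * t)) * weightedOpNorm m α 1 (t • one : Lp ℝ ⊤ m) k := by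
    intro t k
    refine aux_norm_compare hq hC _ _ k _ ?_
    filter_upwards [hzero k, ht t k] with x h1 h2
    rw [h1, h2]; simp
  by_cases hpos : ∀ k, 0 < weightedOpNorm m α 1 (0 : Lp ℝ ⊤ m) k
  · have hnb : ¬ BddBelow (Set.range fun k : ℕ =>
      Real.log (weightedOpNorm m α 1 (0 : Lp ℝ ⊤ m) k) / (k : ℝ)) := fun hb => h ⟨hpos, hb⟩
    have hpt : ∀ (t : ℝ) k, 0 < weightedOpNorm m α 1 (t • one : Lp ℝ ⊤ m) k := fun t k =>
      pos_of_mul_pos_right ((hpos k).trans_le (hcmp2 t k)) (Real.exp_pos _).le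
    have hno : ∀ (t : ℝ) (x : ℝ), ¬ (map (fun k : ℕ =>
        Real.log (weightedOpNorm m α 1 (t • one : Lp ℝ ⊤ m) k) / (k : ℝ)) atTop ≤ nhds x) := by
      intro t x hx
      have hx' : Tendsto (fun k : ℕ =>
        Real.log (weightedOpNorm m α 1 (t • one : Lp ℝ ⊤ m) k) / (k : ℝ)) atTop (nhds x) := hx
      obtain ⟨B, hB⟩ := hx'.bddBelow_range
      refine hnb ⟨min (B - t) 0, ?_⟩
      rintro _ ⟨k, rfl⟩
      dsimp only
      rcases Nat.eq_zero_or_pos k with rfl | hk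
      · simp
      have hk' : (0:ℝ) < k := by exact_mod_cast hk
      refine (min_le_left _ _).trans ?_
      have h1 : B ≤ _ := hB ⟨k, rfl⟩
      dsimp only at h1
      have h2 := Real.log_le_log (hpt t k) (hcmp1 t k)
      rw [Real.log_mul (Real.exp_pos _).ne' (hpos k).ne', Real.log_exp] at h2
      rw [le_div_iff₀ hk'] at h1 ⊢
      linarith
    have hL : ∀ t : ℝ, spectralPotential m α (t • one : Lp ℝ ⊤ m) =
        Classical.epsilon fun _ : ℝ => False := by
      intro t
      unfold spectralPotential spectralPotentialBase limUnder lim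
      congr 1
      funext x
      exact propext ⟨fun hx => (hno t x hx).elim, False.elim⟩
    rw [aux_rhs_bot hμ.2.1 one hone _ hL, ← le_bot_iff, ← EReal.le_of_forall_lt_iff_le]
    intro z _
    obtain ⟨_, ⟨k, rfl⟩, hk⟩ := not_bddBelow_iff.1 hnb (min z 0)
    dsimp only at hk
    have hk0 : 0 < k := by
      rcases Nat.eq_zero_or_pos k with rfl | hk0
      · simp at hk
      · exact hk0
    refine (aux_upper' hq hC hμ 0 k hk0 _ (hpos k) le_rfl).trans ?_
    rw [map_zero, sub_zero, EReal.coe_le_coe_iff]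
    exact hk.le.trans (min_le_left _ _)
  · push Not at hpos
    obtain ⟨k, hk⟩ := hpos
    have hk0 : weightedOpNorm m α 1 (0 : Lp ℝ ⊤ m) k = 0 := le_antisymm hk (aux_norm_nonneg _ _)
    have hall : ∀ j, k ≤ j → weightedOpNorm m α 1 (0 : Lp ℝ ⊤ m) j = 0 := by
      intro j hj
      obtain ⟨l, rfl⟩ := Nat.exists_eq_add_of_le hj
      refine le_antisymm ((aux_submul hq hC _ k l).trans ?_) (aux_norm_nonneg _ _)
      rw [hk0, zero_mul]
    have hL : ∀ t : ℝ, spectralPotential m α (t • one : Lp ℝ ⊤ m) = 0 := by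
      intro t
      unfold spectralPotential spectralPotentialBase
      refine Tendsto.limUnder_eq (Tendsto.congr' ?_ tendsto_const_nhds)
      filter_upwards [eventually_ge_atTop k] with j hj
      have h1 := hcmp1 t j
      rw [hall j hj, mul_zero] at h1
      rw [le_antisymm h1 (aux_norm_nonneg _ _)]
      simp
    rw [aux_rhs_bot hμ.2.1 one hone _ hL, ← le_bot_iff, ← EReal.le_of_forall_lt_iff_le]
    intro z _
    refine (aux_upper' hq hC hμ 0 (k + 1) (Nat.succ_pos k) (Real.exp ((k + 1 : ℕ) * z))
      (Real.exp_pos _) ?_).trans (le_of_eq ?_)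
    · rw [hall (k + 1) (Nat.le_succ k)]; positivity
    · rw [map_zero, sub_zero, Real.log_exp, mul_div_cancel_left₀]
      exact_mod_cast Nat.succ_ne_zero k

lemma aux_lower (hq : Measure.QuasiMeasurePreserving α m m) {C : ℝ≥0} (hC1 : 1 ≤ C)
    (hC : ∀ G : Set X, MeasurableSet G → m (α ⁻¹' G) ≤ (C : ℝ≥0∞) * m G)
    {μ : Lp ℝ ⊤ m →L[ℝ] ℝ} (hμ : MemMalpha m α ⇑μ)
    (hpos : ∀ k, 0 < weightedOpNorm m α 1 (0 : Lp ℝ ⊤ m) k)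
    (hbd : BddBelow (Set.range fun k : ℕ =>
      Real.log (weightedOpNorm m α 1 (0 : Lp ℝ ⊤ m) k) / (k : ℝ)))
    (n : ℕ) (hn : 0 < n) (D : PartUnity m) (c : ℝ) (hc : tauN m α ⇑μ n D ≤ (c : EReal))
    (ε : ℝ) (hε : 0 < ε) :
    ∃ φ : Lp ℝ ⊤ m, spectralPotential m α φ - μ φ ≤ (c + ε) / n := by
  obtain ⟨hμp, hμn, hμi⟩ := hμ
  have hn' : (0:ℝ) < n := by exact_mod_cast hn
  have hgi : ∀ (i : Fin D.k) (f : X → ℝ), Integrable f m →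
      Integrable (fun x => (D.g i) x * |f (α^[n] x)|) m := fun i f hf =>
    aux_integrable_weight hq hC n hf (aux_meas _).aestronglyMeasurable (aux_g_le_one D i)
  let R : Set (Fin D.k → ℝ) := {r | ∃ f : X → ℝ, Integrable f m ∧ (∫ x, |f x| ∂m) = 1 ∧
    r = fun i => ∫ x, (D.g i) x * |f (α^[n] x)| ∂m}
  have hconv : Convex ℝ R := by
    rintro _ ⟨f, hf, hf1, rfl⟩ _ ⟨f', hf', hf1', rfl⟩ a b ha hb hab
    have habs : ∀ x, abs (a * |f x| + b * |f' x|) = a * |f x| + b * |f' x| := fun x =>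
      abs_of_nonneg (by positivity)
    refine ⟨fun x => a * |f x| + b * |f' x|, (hf.abs.const_mul a).add (hf'.abs.const_mul b), ?_, ?_⟩
    · simp only [habs]
      rw [integral_add (hf.abs.const_mul a) (hf'.abs.const_mul b), integral_const_mul,
        integral_const_mul, hf1, hf1', mul_one, mul_one, hab]
    · funext i
      simp only [habs, Pi.add_apply, Pi.smul_apply, smul_eq_mul]
      rw [← integral_const_mul, ← integral_const_mul,
        ← integral_add ((hgi i f hf).const_mul a) ((hgi i f' hf').const_mul b)]
      congr 1
      funext x
      ring
  have hne : R.Nonempty := by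
    by_contra hemp
    have h0 := hpos 0
    rw [aux_norm_def] at h0
    have : {r : ℝ | ∃ f : X → ℝ, Integrable f m ∧ (∫ x, |f x| ∂m) = 1 ∧
        r = ∫ x, Real.exp (birkhoff α (0 : Lp ℝ ⊤ m) 0 x) * |f (α^[0] x)| ∂m} = ∅ := by
      rw [Set.eq_empty_iff_forall_notMem]
      rintro _ ⟨f, hf, hf1, -⟩
      exact hemp ⟨_, f, hf, hf1, rfl⟩
    rw [this, Real.sSup_empty] at h0
    exact lt_irrefl _ h0
  have hR0 : ∀ r ∈ R, ∀ i, 0 ≤ r i := by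
    rintro _ ⟨f, hf, hf1, rfl⟩ i
    refine integral_nonneg_of_ae ?_
    filter_upwards [D.nonneg i] with x hx
    exact mul_nonneg hx (abs_nonneg _)
  have hRM : ∀ r ∈ R, ∀ i, r i ≤ (C : ℝ) ^ n := by
    rintro _ ⟨f, hf, hf1, rfl⟩ i
    refine aux_of_WBd n hq (aux_meas _).aestronglyMeasurable (D.nonneg i) (by positivity) ?_ hf hf1
    refine (aux_WBd_iterate hq hC n).mono ?_ (le_of_eq ?_)
    · filter_upwards [aux_g_le_one D i] with x hx
      exact ENNReal.ofReal_le_one.2 ((le_abs_self _).trans hx)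
    · rw [ENNReal.ofReal_pow (by positivity), ENNReal.ofReal_coe_nnreal]
  obtain ⟨t, q, hq0, hqR, hlog⟩ := aux_minimax R hconv hne _ hR0 hRM (fun i => μ (D.g i))
    (fun i => hμp _ (D.nonneg i)) (aux_mu_partition hμn D) c (by
      rintro _ ⟨f, hf, hf1, rfl⟩
      exact (le_sSup (by exact ⟨f, hf, hf1, rfl⟩)).trans hc) ε hε
  set ψ : Lp ℝ ⊤ m := ∑ i, t i • D.g i with hψ
  have hWB : WBd m α n (fun x => ENNReal.ofReal (Real.exp (ψ x))) (ENNReal.ofReal q) := by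
    have h1 : WBd m α n (fun x => ENNReal.ofReal (∑ i, Real.exp (t i) * (D.g i) x))
        (ENNReal.ofReal q) := by
      refine aux_WBd_of hq hC n (b := ∑ i, Real.exp (t i)) ?_ ?_ ?_ ?_
      · exact (Finset.measurable_fun_sum _ fun i _ =>
          (aux_meas (D.g i)).const_mul _).aestronglyMeasurable
      · filter_upwards [ae_all_iff.2 D.nonneg] with x hx
        exact Finset.sum_nonneg fun i _ => mul_nonneg (Real.exp_pos _).le (hx i)
      · filter_upwards [ae_all_iff.2 (aux_g_le_one D)] with x hx
        refine (Finset.abs_sum_le_sum_abs _ _).trans (Finset.sum_le_sum fun i _ => ?_)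
        rw [abs_mul, abs_of_pos (Real.exp_pos _)]
        exact mul_le_of_le_one_right (Real.exp_pos _).le (hx i)
      · intro f hf hf1
        refine le_trans (le_of_eq ?_) (hqR _ ⟨f, hf, hf1, rfl⟩)
        simp only [Finset.sum_mul, mul_assoc]
        rw [integral_finsetSum _ fun i _ => (hgi i f hf).const_mul _]
        simp only [integral_const_mul]
    refine h1.mono ?_ le_rfl
    filter_upwards [aux_coeFn_lin D.g t, ae_all_iff.2 D.nonneg, D.sum_one] with x h1 h2 h3
    refine ENNReal.ofReal_le_ofReal ?_
    have hcv := convexOn_exp.map_sum_le (t := Finset.univ) (w := fun i => (D.g i) x)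
      (p := t) (fun i _ => h2 i) h3 (fun _ _ => Set.mem_univ _)
    simp only [smul_eq_mul] at hcv
    rw [hψ, h1]
    simpa only [mul_comm] using hcv
  refine ⟨(n : ℝ)⁻¹ • ψ, ?_⟩
  obtain ⟨hp, -, hle⟩ := aux_regular hq hC hpos hbd ((n : ℝ)⁻¹ • ψ)
  set lam := spectralPotential m α ((n : ℝ)⁻¹ • ψ : Lp ℝ ⊤ m) with hlam
  set K : ℝ := n * Real.exp ‖ψ‖ * (C : ℝ) ^ n with hK
  have hC0 : (0:ℝ) < C := by
    have : (1:ℝ) ≤ C := by exact_mod_cast hC1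
    linarith
  have hK0 : 0 < K := by positivity
  have hN : ∀ N : ℕ, N * (n * lam - Real.log q) ≤ Real.log K - n * lam := by
    intro N
    have h1 := hle (n * (N + 1)) (by positivity)
    have h2 := Real.log_le_log (hp _) (aux_lower_norm hq hC ψ n hn q hq0 hWB N)
    rw [Real.log_mul hK0.ne' (by positivity), Real.log_pow] at h2
    rw [le_div_iff₀ (by positivity)] at h1
    push_cast at h1
    nlinarith
  have hfin : n * lam ≤ Real.log q := by
    by_contra! hcon
    have hd : 0 < n * lam - Real.log q := by linarith
    obtain ⟨N, hN2⟩ := exists_nat_gt ((Real.log K - n * lam) / (n * lam - Real.log q))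
    rw [div_lt_iff₀ hd] at hN2
    linarith [hN N]
  have hmu : μ ((n : ℝ)⁻¹ • ψ) = (n : ℝ)⁻¹ * ∑ i, μ (D.g i) * t i := by
    rw [map_smul, hψ, map_sum, smul_eq_mul]
    simp only [map_smul, smul_eq_mul, mul_comm]
  rw [hmu, le_div_iff₀ hn']
  have e : (lam - (n : ℝ)⁻¹ * ∑ i, μ (D.g i) * t i) * n = n * lam - ∑ i, μ (D.g i) * t i := by
    field_simp
  rw [e]
  linarith

end lower

/-- **Theorem 1 (variational principle for t-entropy)**:
`τ(μ) = inf_{φ ∈ L^∞(X, m)} (λ(φ) − μ[φ])` for every `μ ∈ M_α(X, m)`. -/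
theorem variational_principle_tEntropy
    {X : Type*} [MeasurableSpace X] (m : Measure X) (α : X → X)
    (hα : Measurable α) (hbdd : ShiftBounded m α)
    (μ : Lp ℝ ⊤ m →L[ℝ] ℝ) (hμ : MemMalpha m α ⇑μ) :
    tEntropy m α (⇑μ) =
      ⨅ φ : Lp ℝ ⊤ m, ((spectralPotential m α (⇑φ) - μ φ : ℝ) : EReal) := by
  have hq := aux_qmp hα hbdd
  obtain ⟨C, hC1, hC⟩ := aux_const hbdd
  by_cases hreg : (∀ k, 0 < weightedOpNorm m α 1 (0 : Lp ℝ ⊤ m) k) ∧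
      BddBelow (Set.range fun k : ℕ =>
      Real.log (weightedOpNorm m α 1 (0 : Lp ℝ ⊤ m) k) / (k : ℝ))
  swap
  · exact aux_degenerate hq hC hμ hreg
  obtain ⟨hpos, hbd⟩ := hreg
  apply le_antisymm
  · refine le_iInf fun φ => ?_
    obtain ⟨hp, ht, -⟩ := aux_regular hq hC hpos hbd φ
    rw [← EReal.le_of_forall_lt_iff_le]
    intro z hz
    rw [EReal.coe_lt_coe_iff] at hz
    have h1 := ht.eventually_lt_const (show spectralPotential m α φ < z + μ φ by linarith)
    obtain ⟨k, hk, hk0⟩ := (h1.and (eventually_gt_atTop 0)).exists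
    refine (aux_upper' hq hC hμ φ k hk0 _ (hp k) le_rfl).trans ?_
    rw [EReal.coe_le_coe_iff]
    linarith
  · unfold tEntropy
    refine le_iInf₂ fun n hn => le_iInf fun D => ?_
    have hn' : (0:ℝ) < n := by exact_mod_cast hn
    rw [← EReal.le_of_forall_lt_iff_le]
    intro z hz
    obtain ⟨y, hy1, hy2⟩ := EReal.lt_iff_exists_real_btwn.1 hz
    rw [EReal.coe_lt_coe_iff] at hy2
    have hτ : tauN m α ⇑μ n D ≤ ((n * y : ℝ) : EReal) := by
      by_contra! hcon
      have h1 : (((n : ℝ)⁻¹ : ℝ) : EReal) * ((n * y : ℝ) : EReal) ≤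
          (((n : ℝ)⁻¹ : ℝ) : EReal) * tauN m α ⇑μ n D :=
        mul_le_mul_of_nonneg_left hcon.le (by exact_mod_cast (by positivity : (0:ℝ) ≤ (n:ℝ)⁻¹))
      rw [← EReal.coe_mul, inv_mul_cancel_left₀ hn'.ne'] at h1
      exact absurd hy1 (not_lt.2 h1)
    obtain ⟨φ, hφ⟩ := aux_lower hq hC1 hC hμ hpos hbd n hn D (n * y) hτ (n * (z - y))
      (mul_pos hn' (by linarith))
    refine (iInf_le _ φ).trans ?_
    rw [EReal.coe_le_coe_iff]
    refine hφ.trans (le_of_eq ?_)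
    field_simp
    ring

end
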